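/- For every integer k ≥ 1, the formal power series ∑_{n=1}^∞ a_{n,k}·qⁿ ∈ ℚ[[q]] lies in the ℚ-subalgebra of ℚ[[q]] generated by the three quasi-modular forms E_2 = 1 − 24·∑_{n=1}^∞ σ_1(n)qⁿ, E_4 = 1 + 240·∑_{n=1}^∞ σ_3(n)qⁿ, and E_6 = 1 − 504·∑_{n=1}^∞ σ_5(n)qⁿ. (Equivalently, MacMahon's function A_k is a quasi-modular form.) -/

import Mathlib

open scoped Classical

/-- MacMahon's generalized divisor sum `a_{n,k} = ∑ s₁ ⋯ s_k`, summed over all ways of writing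
`n = s₁ m₁ + ⋯ + s_k m_k` with `0 < m₁ < m₂ < ⋯ < m_k` and all `sᵢ > 0`.  (All the `sᵢ` and
`mᵢ` occurring in such a representation are at most `n`, so we may index by `Fin (n+1)`.) -/
noncomputable def macAcoeff (n k : ℕ) : ℕ :=
  ∑ p ∈ Finset.univ.filter
      (fun p : (Fin k → Fin (n + 1)) × (Fin k → Fin (n + 1)) =>
        (∀ i, 0 < (p.1 i : ℕ)) ∧ StrictMono (fun i => (p.2 i : ℕ)) ∧ (∀ i, 0 < (p.2 i : ℕ)) ∧
          ∑ i, (p.1 i : ℕ) * (p.2 i : ℕ) = n),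
    ∏ i, (p.1 i : ℕ)

/-- The sum of the `j`-th powers of the divisors of `n`. -/
def sigma' (j n : ℕ) : ℚ := ∑ d ∈ n.divisors, (d : ℚ) ^ j

/-- The quasi-modular Eisenstein series `E₂ = 1 - 24 ∑ σ₁(n) qⁿ`. -/
noncomputable def E2 : PowerSeries ℚ :=
  PowerSeries.mk fun n => if n = 0 then 1 else -24 * sigma' 1 n

/-- The Eisenstein series `E₄ = 1 + 240 ∑ σ₃(n) qⁿ`. -/
noncomputable def E4 : PowerSeries ℚ :=
  PowerSeries.mk fun n => if n = 0 then 1 else 240 * sigma' 3 n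

/-- The Eisenstein series `E₆ = 1 - 504 ∑ σ₅(n) qⁿ`. -/
noncomputable def E6 : PowerSeries ℚ :=
  PowerSeries.mk fun n => if n = 0 then 1 else -504 * sigma' 5 n

open Finset in
noncomputable def QQ (n : ℕ) : Finset (ℕ × ℕ × ℕ × ℕ) :=
  ((range (n+1)) ×ˢ (range (n+1)) ×ˢ (range (n+1)) ×ˢ (range (n+1))).filter
    (fun q => 0 < q.1 ∧ 0 < q.2.1 ∧ 0 < q.2.2.1 ∧ 0 < q.2.2.2 ∧ q.1 * q.2.1 + q.2.2.1 * q.2.2.2 = n)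

lemma mem_QQ (n a x b y : ℕ) : (a, x, b, y) ∈ QQ n ↔
    0 < a ∧ 0 < x ∧ 0 < b ∧ 0 < y ∧ a * x + b * y = n := by
  simp only [QQ, Finset.mem_filter, Finset.mem_product, Finset.mem_range, and_iff_right_iff_imp]
  rintro ⟨ha, hx, hb, hy, h⟩
  refine ⟨?_, ?_, ?_, ?_⟩ <;> nlinarith

lemma comb (n : ℕ) (F : ℕ → ℕ → ℚ) :
    ∑ q ∈ QQ n, F q.1 q.2.2.1 =
      ∑ q ∈ QQ n with q.1 < q.2.2.1, F q.1 (q.2.2.1 - q.1)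
      + ∑ q ∈ QQ n with q.2.2.1 < q.1, F (q.1 - q.2.2.1) q.2.2.1
      + ∑ d ∈ n.divisors, ∑ a ∈ Finset.Ico 1 d, F a (d - a) := by
  rw [← Finset.sum_filter_add_sum_filter_not (QQ n) (fun q => q.2.2.2 < q.2.1),
    ← Finset.sum_filter_add_sum_filter_not ((QQ n).filter (fun q => ¬ q.2.2.2 < q.2.1))
      (fun q => q.2.1 < q.2.2.2), ← add_assoc]
  congr 1
  · congr 1
    · refine Finset.sum_bij' (fun q _ => (q.1, q.2.1 - q.2.2.2, q.1 + q.2.2.1, q.2.2.2))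
        (fun q _ => (q.1, q.2.1 + q.2.2.2, q.2.2.1 - q.1, q.2.2.2)) ?_ ?_ ?_ ?_ ?_
      · rintro ⟨a, x, b, y⟩ h
        simp only [Finset.mem_filter, mem_QQ] at h ⊢
        obtain ⟨⟨ha, hx, hb, hy, h⟩, h2⟩ := h
        obtain ⟨t, rfl⟩ := Nat.exists_eq_add_of_lt h2
        refine ⟨⟨ha, by omega, by omega, hy, ?_⟩, by omega⟩
        rw [← h, show y + t + 1 - y = t + 1 by omega]; ring
      · rintro ⟨a, x, b, y⟩ h
        simp only [Finset.mem_filter, mem_QQ] at h ⊢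
        obtain ⟨⟨ha, hx, hb, hy, h⟩, h2⟩ := h
        obtain ⟨t, rfl⟩ := Nat.exists_eq_add_of_lt h2
        refine ⟨⟨ha, by omega, by omega, hy, ?_⟩, by omega⟩
        rw [← h, show a + t + 1 - a = t + 1 by omega]; ring
      · rintro ⟨a, x, b, y⟩ h
        simp only [Finset.mem_filter, mem_QQ] at h ⊢
        simp; omega
      · rintro ⟨a, x, b, y⟩ h
        simp only [Finset.mem_filter, mem_QQ] at h ⊢
        simp; omega
      · rintro ⟨a, x, b, y⟩ h
        simp
    · rw [Finset.filter_filter]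
      refine Finset.sum_bij' (fun q _ => (q.1 + q.2.2.1, q.2.1, q.2.2.1, q.2.2.2 - q.2.1))
        (fun q _ => (q.1 - q.2.2.1, q.2.1, q.2.2.1, q.2.2.2 + q.2.1)) ?_ ?_ ?_ ?_ ?_
      · rintro ⟨a, x, b, y⟩ h
        simp only [Finset.mem_filter, mem_QQ] at h ⊢
        obtain ⟨⟨ha, hx, hb, hy, h⟩, h1, h2⟩ := h
        obtain ⟨t, rfl⟩ := Nat.exists_eq_add_of_lt h2
        refine ⟨⟨by omega, by omega, by omega, by omega, ?_⟩, by omega⟩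
        rw [← h, show x + t + 1 - x = t + 1 by omega]; ring
      · rintro ⟨a, x, b, y⟩ h
        simp only [Finset.mem_filter, mem_QQ] at h ⊢
        obtain ⟨⟨ha, hx, hb, hy, h⟩, h2⟩ := h
        obtain ⟨t, rfl⟩ := Nat.exists_eq_add_of_lt h2
        refine ⟨⟨by omega, by omega, by omega, by omega, ?_⟩, by omega, by omega⟩
        rw [← h, show b + t + 1 - b = t + 1 by omega]; ring
      · rintro ⟨a, x, b, y⟩ h
        simp only [Finset.mem_filter, mem_QQ] at h ⊢
        simp; omega
      · rintro ⟨a, x, b, y⟩ h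
        simp only [Finset.mem_filter, mem_QQ] at h ⊢
        simp; omega
      · rintro ⟨a, x, b, y⟩ h
        simp
  · rw [Finset.filter_filter, Finset.sum_sigma']
    refine Finset.sum_bij' (fun q _ => ⟨q.1 + q.2.2.1, q.1⟩)
        (fun p _ => (p.2, n / p.1, p.1 - p.2, n / p.1)) ?_ ?_ ?_ ?_ ?_
    · rintro ⟨a, x, b, y⟩ h
      simp only [Finset.mem_filter, mem_QQ] at h ⊢
      obtain ⟨⟨ha, hx, hb, hy, h⟩, h1, h2⟩ := h
      have : x = y := by omega
      subst this
      simp only [Finset.mem_sigma, Nat.mem_divisors, Finset.mem_Ico]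
      refine ⟨⟨⟨x, by rw [← h]; ring⟩, by nlinarith⟩, by omega, by omega⟩
    · rintro ⟨d, a⟩ h
      simp only [Finset.mem_sigma, Nat.mem_divisors, Finset.mem_Ico] at h
      obtain ⟨⟨⟨t, rfl⟩, h0⟩, h1, h2⟩ := h
      simp only [Finset.mem_filter, mem_QQ]
      have ht : 0 < t := by rcases Nat.eq_zero_or_pos t with rfl | h <;> simp_all
      rw [Nat.mul_div_cancel_left _ (by omega)]
      obtain ⟨s, rfl⟩ := Nat.exists_eq_add_of_lt h2
      refine ⟨⟨by omega, by omega, by omega, by omega, ?_⟩, by omega, by omega⟩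
      rw [show a + s + 1 - a = s + 1 by omega]; ring
    · rintro ⟨a, x, b, y⟩ h
      simp only [Finset.mem_filter, mem_QQ] at h ⊢
      obtain ⟨⟨ha, hx, hb, hy, h⟩, h1, h2⟩ := h
      have : x = y := by omega
      subst this
      have : n / (a + b) = x := by
        rw [← h, ← add_mul, Nat.mul_div_cancel_left _ (by omega)]
      simp [this]
    · rintro ⟨d, a⟩ h
      simp only [Finset.mem_sigma, Nat.mem_divisors, Finset.mem_Ico] at h
      simp only [Sigma.mk.injEq, heq_eq_eq, and_true]
      omega
    · rintro ⟨a, x, b, y⟩ h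
      simp

lemma comb2 (n : ℕ) (F : ℚ → ℚ → ℚ) (h1 : ∀ a b, F a (b - a) = F a (-b))
    (h2 : ∀ a b, F (a - b) b = F a (-b)) (h3 : ∀ a, F a (-a) = 0) (h4 : ∀ b, F 0 b = 0) :
    ∑ q ∈ QQ n, F q.1 q.2.2.1 - ∑ q ∈ QQ n, F q.1 (-q.2.2.1) =
      ∑ d ∈ n.divisors, ∑ a ∈ Finset.range d, F a (-d) := by
  have := comb n (fun a b => F a b)
  rw [this]
  have e1 : ∑ q ∈ QQ n with q.1 < q.2.2.1, F q.1 ((q.2.2.1 - q.1 : ℕ) : ℚ) =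
      ∑ q ∈ QQ n with q.1 < q.2.2.1, F q.1 (- q.2.2.1) := by
    refine Finset.sum_congr rfl fun q hq => ?_
    rw [Finset.mem_filter] at hq
    rw [Nat.cast_sub hq.2.le, h1]
  have e2 : ∑ q ∈ QQ n with q.2.2.1 < q.1, F ((q.1 - q.2.2.1 : ℕ) : ℚ) q.2.2.1 =
      ∑ q ∈ QQ n with q.2.2.1 < q.1, F q.1 (- q.2.2.1) := by
    refine Finset.sum_congr rfl fun q hq => ?_
    rw [Finset.mem_filter] at hq
    rw [Nat.cast_sub hq.2.le, h2]
  have e3 : ∑ d ∈ n.divisors, ∑ a ∈ Finset.Ico 1 d, F a ((d - a : ℕ) : ℚ) =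
      ∑ d ∈ n.divisors, ∑ a ∈ Finset.range d, F a (-d) := by
    refine Finset.sum_congr rfl fun d hd => ?_
    have hd0 : 0 < d := Nat.pos_of_mem_divisors hd
    rw [Finset.range_eq_Ico, Finset.sum_eq_sum_Ico_succ_bot hd0]
    simp only [Nat.cast_zero, h4, zero_add]
    refine Finset.sum_congr rfl fun a ha => ?_
    rw [Finset.mem_Ico] at ha
    rw [Nat.cast_sub ha.2.le, h1]
  rw [e1, e2, e3]
  have e4 : ∑ q ∈ QQ n, F q.1 (-q.2.2.1) = ∑ q ∈ QQ n with q.1 < q.2.2.1, F q.1 (- q.2.2.1)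
      + ∑ q ∈ QQ n with q.2.2.1 < q.1, F q.1 (- q.2.2.1) := by
    simp only [Finset.sum_filter]
    rw [← Finset.sum_add_distrib]
    refine Finset.sum_congr rfl fun q hq => ?_
    rcases lt_trichotomy q.1 q.2.2.1 with h | h | h
    · simp [h, h.not_gt]
    · simp [h, h3]
    · simp [h, h.not_gt]
  rw [e4]; ring

noncomputable def SS (f : ℕ → ℚ) : PowerSeries ℚ :=
  PowerSeries.mk fun n => ∑ d ∈ n.divisors, f d

lemma coeff_SS_mul (n : ℕ) (f g : ℕ → ℚ) :
    PowerSeries.coeff n (SS f * SS g) = ∑ q ∈ QQ n, f q.1 * g q.2.2.1 := by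
  rw [PowerSeries.coeff_mul]
  simp only [SS, PowerSeries.coeff_mk, Finset.sum_mul_sum, ← Finset.sum_product']
  rw [Finset.sum_sigma']
  refine Finset.sum_bij' (fun p _ => (p.2.1, p.1.1 / p.2.1, p.2.2, p.1.2 / p.2.2))
    (fun q _ => ⟨(q.1 * q.2.1, q.2.2.1 * q.2.2.2), (q.1, q.2.2.1)⟩) ?_ ?_ ?_ ?_ ?_
  · rintro ⟨⟨u, v⟩, ⟨a, b⟩⟩ h
    simp only [Finset.mem_sigma, Finset.mem_product, Nat.mem_divisors] at h
    obtain ⟨h, ⟨⟨x, rfl⟩, h1⟩, ⟨⟨y, rfl⟩, h2⟩⟩ := h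
    simp only [mul_ne_zero_iff] at h1 h2
    have h' := Finset.HasAntidiagonal.mem_antidiagonal.mp h
    simp only at h'
    simp only [mem_QQ]
    rw [Nat.mul_div_cancel_left _ (by omega), Nat.mul_div_cancel_left _ (by omega)]
    omega
  · rintro ⟨a, x, b, y⟩ h
    rw [mem_QQ] at h
    simp only [Finset.mem_sigma, Finset.mem_product, Nat.mem_divisors]
    exact ⟨Finset.HasAntidiagonal.mem_antidiagonal.mpr h.2.2.2.2, ⟨⟨_, rfl⟩, (Nat.mul_pos h.1 h.2.1).ne'⟩,
      ⟨⟨_, rfl⟩, (Nat.mul_pos h.2.2.1 h.2.2.2.1).ne'⟩⟩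
  · rintro ⟨⟨u, v⟩, ⟨a, b⟩⟩ h
    simp only [Finset.mem_sigma, Finset.mem_product, Nat.mem_divisors] at h
    simp [Nat.mul_div_cancel' h.2.1.1, Nat.mul_div_cancel' h.2.2.1]
  · rintro ⟨a, x, b, y⟩ h
    rw [mem_QQ] at h
    simp [Nat.mul_div_cancel_left _ h.1, Nat.mul_div_cancel_left _ h.2.2.1]
  · rintro ⟨⟨u, v⟩, ⟨a, b⟩⟩ h
    simp
def IsHom (N : ℕ) (F : ℝ → ℝ → ℝ) : Prop :=
  ∃ c : ℕ × ℕ → ℚ, ∀ x y, F x y =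
    ∑ p ∈ Finset.HasAntidiagonal.antidiagonal N, (c p : ℝ) * x ^ p.1 * y ^ p.2

lemma IsHom.add {N F G} (hF : IsHom N F) (hG : IsHom N G) :
    IsHom N (fun x y => F x y + G x y) := by
  obtain ⟨c, hc⟩ := hF
  obtain ⟨d, hd⟩ := hG
  refine ⟨fun p => c p + d p, fun x y => ?_⟩
  simp only [hc, hd, ← Finset.sum_add_distrib]
  refine Finset.sum_congr rfl fun p _ => ?_
  push_cast; ring

lemma IsHom.mulx {N F} (hF : IsHom N F) : IsHom (N + 1) (fun x y => x * F x y) := by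
  obtain ⟨c, hc⟩ := hF
  refine ⟨fun p => if p.1 = 0 then 0 else c (p.1 - 1, p.2), fun x y => ?_⟩
  simp only [hc]
  rw [Finset.Nat.sum_antidiagonal_succ, Finset.mul_sum]
  simp only [if_true, Rat.cast_zero, zero_mul, zero_add, Nat.add_one_ne_zero, if_false,
    Nat.add_sub_cancel]
  refine Finset.sum_congr rfl fun p _ => ?_
  ring

lemma IsHom.muly {N F} (hF : IsHom N F) : IsHom (N + 1) (fun x y => y * F x y) := by
  obtain ⟨c, hc⟩ := hF
  refine ⟨fun p => if p.2 = 0 then 0 else c (p.1, p.2 - 1), fun x y => ?_⟩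
  simp only [hc]
  rw [Finset.Nat.sum_antidiagonal_succ', Finset.mul_sum]
  simp only [if_true, Rat.cast_zero, zero_mul, zero_add, Nat.add_one_ne_zero, if_false,
    Nat.add_sub_cancel]
  refine Finset.sum_congr rfl fun p _ => ?_
  ring

lemma isHom_main (m : ℕ) :
    IsHom (2 * m + 2) (fun x y => (x + y) ^ 2 * (x ^ 2 + x * y + y ^ 2) ^ m) := by
  induction m with
  | zero =>
    have h0 : IsHom 0 (fun _ _ => 1) := ⟨fun _ => 1, fun x y => by simp⟩
    have := (h0.mulx.add h0.muly)
    have := this.mulx.add this.muly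
    convert this using 3
    ring
  | succ m ih =>
    have := (ih.mulx.mulx.add ih.mulx.muly).add ih.muly.muly
    have e : (fun x y : ℝ => (x + y) ^ 2 * (x ^ 2 + x * y + y ^ 2) ^ (m + 1)) = fun x y =>
        x * (x * ((x + y) ^ 2 * (x ^ 2 + x * y + y ^ 2) ^ m)) +
        y * (x * ((x + y) ^ 2 * (x ^ 2 + x * y + y ^ 2) ^ m)) +
        y * (y * ((x + y) ^ 2 * (x ^ 2 + x * y + y ^ 2) ^ m)) := by
      funext x y
      rw [pow_succ (x ^ 2 + x * y + y ^ 2) m]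
      rw [show ∀ A B : ℝ, A * (B * (x ^ 2 + x * y + y ^ 2)) = x * (x * (A * B)) + y * (x * (A * B))
        + y * (y * (A * B)) by intros; ring]
    rw [e]
    exact this

lemma exists_c (m : ℕ) : ∃ c : ℕ × ℕ → ℚ,
    (∀ x y : ℚ, x ^ 2 * y ^ 2 * (x + y) ^ 2 * (x ^ 2 + x * y + y ^ 2) ^ m =
      ∑ p ∈ Finset.HasAntidiagonal.antidiagonal (2 * m + 2), c p * x ^ (p.1 + 2) * y ^ (p.2 + 2)) ∧
    ∑ p ∈ Finset.HasAntidiagonal.antidiagonal (2 * m + 2), c p * (-1) ^ p.2 / (p.1 + 3) ≠ 0 := by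
  obtain ⟨c, hc⟩ := isHom_main m
  refine ⟨c, fun x y => ?_, fun h0 => ?_⟩
  · have := hc x y
    have h2 : (((x + y) ^ 2 * (x ^ 2 + x * y + y ^ 2) ^ m : ℚ) : ℝ) =
      ((∑ p ∈ Finset.HasAntidiagonal.antidiagonal (2 * m + 2), c p * x ^ p.1 * y ^ p.2 : ℚ) : ℝ) := by
      push_cast; exact this
    have h3 := Rat.cast_injective h2
    rw [mul_assoc, h3, Finset.mul_sum]
    refine Finset.sum_congr rfl fun p _ => ?_
    ring
  · have h1 : ∫ t in (0:ℝ)..1, t ^ 2 * ((t + (-1)) ^ 2 * (t ^ 2 + t * (-1) + (-1) ^ 2) ^ m) =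
      ((∑ p ∈ Finset.HasAntidiagonal.antidiagonal (2 * m + 2),
        c p * (-1) ^ p.2 / (p.1 + 3) : ℚ) : ℝ) := by
      simp only [hc, Finset.mul_sum]
      rw [intervalIntegral.integral_finsetSum]
      · push_cast
        refine Finset.sum_congr rfl fun p _ => ?_
        have : ∀ t : ℝ, t ^ 2 * ((c p : ℝ) * t ^ p.1 * (-1) ^ p.2) =
          ((c p : ℝ) * (-1) ^ p.2) * t ^ (p.1 + 2) := fun t => by ring
        simp only [this]
        rw [intervalIntegral.integral_const_mul, integral_pow]
        simp
        ring
      · intro p _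
        apply Continuous.intervalIntegrable
        fun_prop
    rw [h0] at h1
    have h2 : 0 < ∫ t in (0:ℝ)..1, t ^ 2 * ((t + (-1)) ^ 2 * (t ^ 2 + t * (-1) + (-1) ^ 2) ^ m) := by
      apply intervalIntegral.intervalIntegral_pos_of_pos_on
      · apply Continuous.intervalIntegrable
        fun_prop
      · intro t ht
        have a1 : 0 < t := ht.1
        have a2 : 0 < 1 - t := by linarith [ht.2]
        have a3 : 0 < t ^ 2 + t * (-1) + (-1) ^ 2 := by nlinarith
        have a4 : 0 < (t + (-1)) ^ 2 := by nlinarith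
        positivity
      · norm_num
    simp at h1 h2
    linarith

/-- the function `Σ_{a<d} a^i + d^i/2` times `d^j`. -/
lemma faul (i j d : ℕ) (hi : 1 ≤ i) :
    (d : ℚ) ^ j * (∑ a ∈ Finset.range d, (a : ℚ) ^ i + d ^ i / 2) =
      (d : ℚ) ^ (i + j + 1) / (i + 1) + ∑ l ∈ Finset.Ico 2 (i + 1),
        (bernoulli l * ((i + 1).choose l) / (i + 1)) * (d : ℚ) ^ (i + j + 1 - l) := by
  rw [sum_range_pow, Finset.range_eq_Ico, Finset.sum_eq_sum_Ico_succ_bot (by omega),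
    Finset.sum_eq_sum_Ico_succ_bot (by omega)]
  simp only [bernoulli_zero, bernoulli_one, zero_add, Nat.choose_zero_right, Nat.choose_one_right,
    Nat.reduceAdd]
  have hi' : (i : ℚ) + 1 ≠ 0 := by positivity
  have : ∀ A B C D : ℚ, (d:ℚ) ^ j * (A + (B + C) + D) = d ^ j * A + d ^ j * (B + D) + d ^ j * C := by
    intros; ring
  rw [this, Finset.mul_sum]
  congr 1
  · have e : (-1 / 2 * ((i + 1 : ℕ) : ℚ) * (d:ℚ) ^ (i + 1 - 1) / (i + 1) + d ^ i / 2) = 0 := by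
      rw [Nat.add_sub_cancel]; push_cast; field_simp; ring
    rw [e]
    push_cast
    ring
  · refine Finset.sum_congr rfl fun l hl => ?_
    rw [Finset.mem_Ico] at hl
    rw [show i + j + 1 - l = j + (i + 1 - l) by omega, pow_add]
    ring

lemma SS_add (f g : ℕ → ℚ) : SS (fun d => f d + g d) = SS f + SS g := by
  ext n; simp [SS, Finset.sum_add_distrib]

lemma SS_smul (c : ℚ) (f : ℕ → ℚ) : SS (fun d => c * f d) = c • SS f := by
  ext n; simp [SS, Finset.mul_sum]

lemma SS_sum {ι : Type*} (s : Finset ι) (f : ι → ℕ → ℚ) :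
    SS (fun d => ∑ i ∈ s, f i d) = ∑ i ∈ s, SS (f i) := by
  ext n
  simp only [SS, PowerSeries.coeff_mk, map_sum]
  rw [Finset.sum_comm]

noncomputable def GG (r : ℕ) : PowerSeries ℚ := SS (fun d => (d : ℚ) ^ r)

lemma SS_faul (i j : ℕ) (hi : 1 ≤ i) :
    SS (fun d => (d : ℚ) ^ j * (∑ a ∈ Finset.range d, (a : ℚ) ^ i + d ^ i / 2)) =
      (1 / ((i : ℚ) + 1)) • GG (i + j + 1) + ∑ l ∈ Finset.Ico 2 (i + 1),
        (bernoulli l * ((i + 1).choose l) / (i + 1)) • GG (i + j + 1 - l) := by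
  simp only [GG, ← SS_smul, ← SS_sum, ← SS_add]
  congr 1
  funext d
  rw [faul i j d hi]
  ring

lemma main_identity (m : ℕ) (c : ℕ × ℕ → ℚ)
    (hc : ∀ x y : ℚ, x ^ 2 * y ^ 2 * (x + y) ^ 2 * (x ^ 2 + x * y + y ^ 2) ^ m =
      ∑ p ∈ Finset.HasAntidiagonal.antidiagonal (2 * m + 2), c p * x ^ (p.1 + 2) * y ^ (p.2 + 2)) :
    ∑ p ∈ Finset.HasAntidiagonal.antidiagonal (2 * m + 2),
      (c p * (1 - (-1) ^ p.2)) • (GG (p.1 + 2) * GG (p.2 + 2)) =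
    ∑ p ∈ Finset.HasAntidiagonal.antidiagonal (2 * m + 2), (c p * (-1) ^ p.2) •
      SS (fun d => (d : ℚ) ^ (p.2 + 2) * (∑ a ∈ Finset.range d, (a : ℚ) ^ (p.1 + 2)
        + d ^ (p.1 + 2) / 2)) := by
  have key := fun n => comb2 n (fun x y => x ^ 2 * y ^ 2 * (x + y) ^ 2 * (x ^ 2 + x * y + y ^ 2) ^ m)
    (by intro a b
        have : a ^ 2 + a * (b - a) + (b - a) ^ 2 = a ^ 2 + a * -b + (-b) ^ 2 := by ring
        simp only [this]; ring)
    (by intro a b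
        have : (a - b) ^ 2 + (a - b) * b + b ^ 2 = a ^ 2 + a * -b + (-b) ^ 2 := by ring
        simp only [this]; ring) (by intro a; simp) (by intro a; simp)
  have hz : ∀ d : ℚ, ∑ p ∈ Finset.HasAntidiagonal.antidiagonal (2 * m + 2),
      c p * d ^ (p.1 + 2) * (-d) ^ (p.2 + 2) = 0 := fun d => by rw [← hc]; simp
  ext n
  have kn := key n
  simp only [hc] at kn
  simp only [map_sum, map_smul, GG, coeff_SS_mul, smul_eq_mul]
  have neg : ∀ (x : ℚ) (j : ℕ), (-x) ^ (j + 2) = (-1) ^ j * x ^ (j + 2) := by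
    intro x j
    rw [neg_pow x, pow_add (-1 : ℚ)]; ring
  calc _ = _ := ?_
    _ = _ := kn
    _ = _ := ?_
  · rw [← Finset.sum_sub_distrib]
    simp only [← Finset.sum_sub_distrib, Finset.mul_sum]
    rw [Finset.sum_comm]
    refine Finset.sum_congr rfl fun q _ => Finset.sum_congr rfl fun p _ => ?_
    rw [neg]; ring
  · simp only [SS, PowerSeries.coeff_mk, Finset.mul_sum]
    rw [Finset.sum_comm (t := n.divisors)]
    refine Finset.sum_congr rfl fun d _ => ?_
    rw [Finset.sum_comm]
    have h0 := hz d
    simp only [neg] at h0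
    calc _ = ∑ p ∈ Finset.HasAntidiagonal.antidiagonal (2 * m + 2),
          ∑ a ∈ Finset.range d, c p * (a : ℚ) ^ (p.1 + 2) * (-d) ^ (p.2 + 2) +
          (1 / 2) * ∑ p ∈ Finset.HasAntidiagonal.antidiagonal (2 * m + 2),
            c p * (d : ℚ) ^ (p.1 + 2) * ((-1) ^ p.2 * d ^ (p.2 + 2)) := by rw [h0]; simp
      _ = _ := by
        rw [Finset.mul_sum, ← Finset.sum_add_distrib]
        refine Finset.sum_congr rfl fun p _ => ?_
        simp only [neg, mul_add, Finset.mul_sum]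
        congr 1
        · refine Finset.sum_congr rfl fun a _ => ?_
          ring
        · ring

lemma step (A : Subalgebra ℚ (PowerSeries ℚ)) (m : ℕ)
    (h : ∀ r, Odd r → r < 2 * m + 7 → GG r ∈ A) : GG (2 * m + 7) ∈ A := by
  obtain ⟨c, hc, hL⟩ := exists_c m
  have key := main_identity m c hc
  have hl : ∑ p ∈ Finset.HasAntidiagonal.antidiagonal (2 * m + 2),
      (c p * (1 - (-1) ^ p.2)) • (GG (p.1 + 2) * GG (p.2 + 2)) ∈ A := by
    refine A.sum_mem fun p hp => ?_
    have hp' := Finset.HasAntidiagonal.mem_antidiagonal.mp hp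
    rcases Nat.even_or_odd p.2 with he | ho
    · simp [he.neg_one_pow]
    · refine A.smul_mem (A.mul_mem (h _ ?_ ?_) (h _ ?_ ?_)) _
      · rw [Nat.odd_iff] at *; omega
      · rw [Nat.odd_iff] at *; omega
      · rw [Nat.odd_iff] at *; omega
      · omega
  rw [key] at hl
  have hs : ∀ p ∈ Finset.HasAntidiagonal.antidiagonal (2 * m + 2), (c p * (-1) ^ p.2) •
      SS (fun d => (d : ℚ) ^ (p.2 + 2) * (∑ a ∈ Finset.range d, (a : ℚ) ^ (p.1 + 2)
        + d ^ (p.1 + 2) / 2)) = (c p * (-1) ^ p.2 / (p.1 + 3)) • GG (2 * m + 7) +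
      (c p * (-1) ^ p.2) • ∑ l ∈ Finset.Ico 2 (p.1 + 2 + 1),
        (bernoulli l * ((p.1 + 2 + 1).choose l) / ((p.1 + 2 : ℕ) + 1)) • GG (2 * m + 7 - l) := by
    intro p hp
    have hp' := Finset.HasAntidiagonal.mem_antidiagonal.mp hp
    rw [SS_faul _ _ (by omega), show p.1 + 2 + (p.2 + 2) + 1 = 2 * m + 7 by omega, smul_add, smul_smul]
    congr 2
    push_cast
    rw [add_assoc]; norm_num; ring
  rw [Finset.sum_congr rfl hs, Finset.sum_add_distrib, ← Finset.sum_smul] at hl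
  have h2 : ∑ p ∈ Finset.HasAntidiagonal.antidiagonal (2 * m + 2),
      (c p * (-1) ^ p.2) • ∑ l ∈ Finset.Ico 2 (p.1 + 2 + 1),
        (bernoulli l * ((p.1 + 2 + 1).choose l) / ((p.1 + 2 : ℕ) + 1)) • GG (2 * m + 7 - l) ∈ A := by
    refine A.sum_mem fun p hp => A.smul_mem (A.sum_mem fun l hl => ?_) _
    have hp' := Finset.HasAntidiagonal.mem_antidiagonal.mp hp
    rw [Finset.mem_Ico] at hl
    rcases Nat.even_or_odd l with he | ho
    · refine A.smul_mem (h _ ?_ ?_) _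
      · rw [Nat.even_iff] at he; rw [Nat.odd_iff]; omega
      · omega
    · rw [bernoulli_eq_zero_of_odd ho (by omega)]; simp
  have h3 := A.sub_mem hl h2
  rw [add_sub_cancel_right] at h3
  have h4 := A.smul_mem h3 (∑ p ∈ Finset.HasAntidiagonal.antidiagonal (2 * m + 2), c p * (-1) ^ p.2 / (p.1 + 3))⁻¹
  rwa [smul_smul, inv_mul_cancel₀ hL, one_smul] at h4

lemma GG_mem (r : ℕ) (hr : Odd r) : GG r ∈ Algebra.adjoin ℚ ({E2, E4, E6} : Set (PowerSeries ℚ)) := by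
  set A := Algebra.adjoin ℚ ({E2, E4, E6} : Set (PowerSeries ℚ)) with hA
  have base : ∀ (c : ℚ) (j : ℕ), c ≠ 0 →
      (PowerSeries.mk fun n => if n = 0 then 1 else c * sigma' j n) ∈ A → GG j ∈ A := by
    intro c j hc h
    have : GG j = c⁻¹ • ((PowerSeries.mk fun n => if n = 0 then 1 else c * sigma' j n) - 1) := by
      ext n
      rcases Nat.eq_zero_or_pos n with rfl | hn
      · simp [GG, SS]
      · simp [GG, SS, PowerSeries.coeff_one, hn.ne', sigma', hc]
    rw [this]
    exact A.smul_mem (A.sub_mem h A.one_mem) _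
  have h1 : GG 1 ∈ A := base (-24) 1 (by norm_num) (Algebra.subset_adjoin (by simp [E2]))
  have h3 : GG 3 ∈ A := base (240) 3 (by norm_num) (Algebra.subset_adjoin (by simp [E4]))
  have h5 : GG 5 ∈ A := base (-504) 5 (by norm_num) (Algebra.subset_adjoin (by simp [E6]))
  induction r using Nat.strong_induction_on with
  | _ r ih =>
    obtain ⟨t, rfl⟩ := hr
    match t, ih with
    | 0, _ => exact h1
    | 1, _ => exact h3
    | 2, _ => exact h5
    | t + 3, ih => exact step A t fun r hr hlt => ih r (by omega) hr

noncomputable def uu : PowerSeries ℚ := PowerSeries.mk fun n => (n : ℚ)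

lemma coeff_uu_pow (k s : ℕ) :
    PowerSeries.coeff s (uu ^ (k + 1)) = ((s + k).choose (2 * k + 1) : ℚ) := by
  have h : uu = PowerSeries.X * (PowerSeries.mk 1) ^ 2 := by
    rw [show 2 = 1 + 1 from rfl, PowerSeries.mk_one_pow_eq_mk_choose_add]
    ext n
    rcases n with _ | n
    · simp [uu]
    · rw [PowerSeries.coeff_succ_X_mul]; simp [uu]; ring
  rw [h, mul_pow, ← pow_mul, show 2 * (k + 1) = (2 * k + 1) + 1 by ring,
    PowerSeries.mk_one_pow_eq_mk_choose_add, PowerSeries.coeff_X_pow_mul']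
  split_ifs with hs
  · rw [PowerSeries.coeff_mk, show 2 * k + 1 + (s - (k + 1)) = s + k by omega]
  · rw [Nat.choose_eq_zero_of_lt (by omega)]; simp

lemma choose_rec (s k : ℕ) : ((s + (k + 1)).choose (2 * (k + 1) + 1) : ℚ) =
    ((s : ℚ) ^ 2 - (k + 1) ^ 2) / ((2 * k + 2) * (2 * k + 3)) * ((s + k).choose (2 * k + 1) : ℚ) := by
  have h1 := Nat.add_one_mul_choose_eq (s + k) (2 * k + 1)
  have h2 := Nat.choose_succ_right_eq (s + k + 1) (2 * k + 2)
  have h3 : ((s + k + 1).choose (2 * k + 3) : ℚ) * (2 * k + 3) =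
      (s + k + 1).choose (2 * k + 2) * ((s : ℚ) - (k + 1)) := by
    rcases le_or_gt (k + 1) s with h | h
    · rw [show s + k + 1 - (2 * k + 2) = s - (k + 1) by omega] at h2
      have h2' := congrArg (Nat.cast : ℕ → ℚ) h2
      push_cast [Nat.cast_sub h] at h2'
      linarith
    · rw [Nat.choose_eq_zero_of_lt (by omega), Nat.choose_eq_zero_of_lt (by omega)]; simp
  have h1' := congrArg (Nat.cast : ℕ → ℚ) h1
  push_cast at h1'
  rw [show 2 * k + 1 + 1 = 2 * k + 2 by ring] at h1'
  rw [show s + (k + 1) = s + k + 1 by ring, show 2 * (k + 1) + 1 = 2 * k + 3 by ring]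
  have e1 : (2 * k + 2 : ℚ) ≠ 0 := by positivity
  have e2 : (2 * k + 3 : ℚ) ≠ 0 := by positivity
  field_simp
  linear_combination (2 * k + 2 : ℚ) * h3 - ((s : ℚ) - (k + 1)) * h1'

lemma choose_odd (k : ℕ) : ∃ c : ℕ → ℚ, ∀ s : ℕ, ((s + k).choose (2 * k + 1) : ℚ) =
    ∑ i ∈ Finset.range (k + 1), c i * (s : ℚ) ^ (2 * i + 1) := by
  induction k with
  | zero => exact ⟨fun _ => 1, fun s => by simp⟩
  | succ k ih =>
    obtain ⟨c, hc⟩ := ih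
    refine ⟨fun i => (((if i = 0 then 0 else c (i - 1)) - (k + 1) ^ 2 * (if i = k + 1 then 0 else c i)))
      / ((2 * k + 2) * (2 * k + 3)), fun s => ?_⟩
    rw [choose_rec, hc]
    have : ∀ i : ℕ, (((if i = 0 then 0 else c (i - 1)) - (k + 1 : ℚ) ^ 2 * (if i = k + 1 then 0 else c i)))
      / ((2 * k + 2) * (2 * k + 3)) * (s : ℚ) ^ (2 * i + 1) =
      (1 / ((2 * k + 2) * (2 * k + 3))) * ((if i = 0 then 0 else c (i - 1)) * (s : ℚ) ^ (2 * i + 1)) -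
      ((k + 1 : ℚ) ^ 2 / ((2 * k + 2) * (2 * k + 3))) *
        ((if i = k + 1 then 0 else c i) * (s : ℚ) ^ (2 * i + 1)) := by
      intro i; ring
    simp only [this]
    rw [Finset.sum_sub_distrib, ← Finset.mul_sum, ← Finset.mul_sum]
    have a1 : ∑ i ∈ Finset.range (k + 1 + 1), (if i = 0 then 0 else c (i - 1)) * (s : ℚ) ^ (2 * i + 1)
        = s ^ 2 * ∑ i ∈ Finset.range (k + 1), c i * (s : ℚ) ^ (2 * i + 1) := by
      rw [Finset.sum_range_succ', Finset.mul_sum]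
      simp only [if_true, zero_mul, add_zero, Nat.add_one_ne_zero, if_false, Nat.add_sub_cancel]
      refine Finset.sum_congr rfl fun i _ => ?_
      ring
    have a2 : ∑ i ∈ Finset.range (k + 1 + 1), (if i = k + 1 then 0 else c i) * (s : ℚ) ^ (2 * i + 1)
        = ∑ i ∈ Finset.range (k + 1), c i * (s : ℚ) ^ (2 * i + 1) := by
      rw [Finset.sum_range_succ]
      simp only [if_true, zero_mul, add_zero]
      refine Finset.sum_congr rfl fun i hi => ?_
      rw [Finset.mem_range] at hi
      rw [if_neg (by omega)]
    rw [a1, a2]; ring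

noncomputable def PP (j : ℕ) : PowerSeries ℚ := SS (fun d => PowerSeries.coeff d (uu ^ j))

lemma PP_mem (j : ℕ) (hj : 1 ≤ j) :
    PP j ∈ Algebra.adjoin ℚ ({E2, E4, E6} : Set (PowerSeries ℚ)) := by
  obtain ⟨k, rfl⟩ := Nat.exists_eq_add_of_le' hj
  obtain ⟨c, hc⟩ := choose_odd k
  have : PP (k + 1) = ∑ i ∈ Finset.range (k + 1), c i • GG (2 * i + 1) := by
    simp only [GG, PP, ← SS_smul, ← SS_sum, coeff_uu_pow, hc]
  rw [this]
  exact Subalgebra.sum_mem _ fun i _ => Subalgebra.smul_mem _ (GG_mem _ ⟨i, rfl⟩) _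

noncomputable def xx (m : ℕ) : PowerSeries ℚ :=
  if h : m = 0 then 0 else PowerSeries.expand m h uu

lemma coeff_xx_pow (m i j : ℕ) (hm : m ≠ 0) : PowerSeries.coeff i (xx m ^ j) =
    if m ∣ i then PowerSeries.coeff (i / m) (uu ^ j) else 0 := by
  rw [xx, dif_neg hm, ← map_pow, PowerSeries.coeff_expand]

lemma psum_coeff (n i j : ℕ) (hj : 1 ≤ j) (hi : i ≤ n) :
    PowerSeries.coeff i (∑ m ∈ Finset.range (n + 1), xx m ^ j) = PowerSeries.coeff i (PP j) := by
  have hx0 : xx 0 = 0 := by simp [xx]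
  rw [Finset.sum_range_succ', hx0, zero_pow (by omega), add_zero, map_sum]
  simp only [coeff_xx_pow _ _ _ (Nat.succ_ne_zero _), PP, SS, PowerSeries.coeff_mk]
  rcases Nat.eq_zero_or_pos i with rfl | hi0
  · obtain ⟨k, rfl⟩ := Nat.exists_eq_add_of_le' hj
    simp [coeff_uu_pow, Nat.choose_eq_zero_of_lt (show k < 2 * k + 1 by omega)]
  · rw [← Nat.sum_div_divisors i (fun d => PowerSeries.coeff d (uu ^ j)), ← Finset.sum_filter]
    refine Finset.sum_bij' (fun m _ => m + 1) (fun d _ => d - 1) ?_ ?_ ?_ ?_ ?_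
    · intro m hm
      rw [Finset.mem_filter] at hm
      exact Nat.mem_divisors.mpr ⟨hm.2, hi0.ne'⟩
    · intro d hd
      have h1 := Nat.pos_of_mem_divisors hd
      have h2 := Nat.divisor_le hd
      rw [Finset.mem_filter, Finset.mem_range, show (d - 1).succ = d by omega]
      exact ⟨by omega, Nat.dvd_of_mem_divisors hd⟩
    · intro m hm; simp
    · intro d hd
      exact Nat.sub_add_cancel (Nat.pos_of_mem_divisors hd)
    · intro m hm; rfl

noncomputable def ee (k N : ℕ) : PowerSeries ℚ :=
  ∑ t ∈ Finset.powersetCard k (Finset.range (N + 1)), ∏ m ∈ t, xx m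

lemma ee_zero (N : ℕ) : ee 0 N = 1 := by simp [ee]

lemma ee_succ (k N : ℕ) : ee (k + 1) (N + 1) = ee (k + 1) N + xx (N + 1) * ee k N := by
  rw [ee, Finset.range_add_one (n := N + 1), Finset.powersetCard_succ_insert (by simp), Finset.sum_union,
    Finset.sum_image]
  · congr 1
    rw [ee, Finset.mul_sum]
    refine Finset.sum_congr rfl fun t ht => ?_
    rw [Finset.mem_powersetCard] at ht
    rw [Finset.prod_insert fun h => by simpa using ht.1 h]
  · intro s hs t ht hst
    simp only [Finset.mem_coe, Finset.mem_powersetCard] at hs ht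
    have h1 : N + 1 ∉ s := fun h => by simpa using hs.1 h
    have h2 : N + 1 ∉ t := fun h => by simpa using ht.1 h
    rw [← Finset.erase_insert h1, hst, Finset.erase_insert h2]
  · rw [Finset.disjoint_left]
    intro s hs hs'
    rw [Finset.mem_image] at hs'
    obtain ⟨t, _, rfl⟩ := hs'
    rw [Finset.mem_powersetCard] at hs
    simpa using hs.1 (Finset.mem_insert_self _ _)

lemma ee_stab (k i N : ℕ) (h : i ≤ N) :
    PowerSeries.coeff i (ee k N) = PowerSeries.coeff i (ee k i) := by
  rcases k with _ | k
  · simp [ee_zero]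
  induction N, h using Nat.le_induction with
  | base => rfl
  | succ N hN ih =>
    rw [ee_succ, map_add, ih, add_eq_left, PowerSeries.coeff_mul]
    refine Finset.sum_eq_zero fun p hp => ?_
    have hp' := Finset.HasAntidiagonal.mem_antidiagonal.mp hp
    have := coeff_xx_pow (N + 1) p.1 1 (by omega)
    rw [pow_one, pow_one] at this
    rw [this]
    split_ifs with hd
    · rcases Nat.eq_zero_or_pos p.1 with h0 | h0
      · simp [h0, uu]
      · have := Nat.le_of_dvd h0 hd
        omega
    · simp

lemma newton (k N : ℕ) : (k : PowerSeries ℚ) * ee k N = (-1) ^ (k + 1) *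
    ∑ a ∈ Finset.HasAntidiagonal.antidiagonal k with a.1 < k,
      (-1) ^ a.1 * ee a.1 N * ∑ m ∈ Finset.range (N + 1), xx m ^ a.2 := by
  have h := congrArg (MvPolynomial.aeval (fun i : Fin (N + 1) => xx i))
    (MvPolynomial.mul_esymm_eq_sum (Fin (N + 1)) ℚ k)
  have he : ∀ j, MvPolynomial.aeval (fun i : Fin (N + 1) => xx i)
      (MvPolynomial.esymm (Fin (N + 1)) ℚ j) = ee j N := by
    intro j
    rw [MvPolynomial.aeval_esymm_eq_multiset_esymm, ee, ← Finset.esymm_map_val]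
    congr 1
    rw [← Nat.Iio_eq_range, ← Fin.map_valEmbedding_univ, Finset.map_val, Multiset.map_map]
    rfl
  have hp : ∀ j, MvPolynomial.aeval (fun i : Fin (N + 1) => xx i)
      (MvPolynomial.psum (Fin (N + 1)) ℚ j) = ∑ m ∈ Finset.range (N + 1), xx m ^ j := by
    intro j
    simp [MvPolynomial.psum, Finset.sum_range]
  simpa [he, hp] using h

lemma prod_congr_mod {k : ℕ} (n : ℕ) (f g : Fin k → PowerSeries ℚ)
    (h : ∀ i, ∀ j ≤ n, PowerSeries.coeff j (f i) = PowerSeries.coeff j (g i)) :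
    PowerSeries.coeff n (∏ i, f i) = PowerSeries.coeff n (∏ i, g i) := by
  let I : Ideal (PowerSeries ℚ) := Ideal.span {PowerSeries.X ^ (n + 1)}
  have h1 : ∀ i, Ideal.Quotient.mk I (f i) = Ideal.Quotient.mk I (g i) := by
    intro i
    rw [Ideal.Quotient.eq, Ideal.mem_span_singleton, PowerSeries.X_pow_dvd_iff]
    intro j hj
    rw [map_sub, h i j (by omega), sub_self]
  have h2 : Ideal.Quotient.mk I (∏ i, f i) = Ideal.Quotient.mk I (∏ i, g i) := by
    simp only [map_prod, h1]
  rw [Ideal.Quotient.eq, Ideal.mem_span_singleton, PowerSeries.X_pow_dvd_iff] at h2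
  have := h2 n (by omega)
  rwa [map_sub, sub_eq_zero] at this

lemma coeff_prod_xx (n k : ℕ) (f : Fin k → Fin (n + 1)) :
    PowerSeries.coeff n (∏ i, xx (f i)) = ∑ s : Fin k → Fin (n + 1),
      if (∀ i, 0 < (f i : ℕ)) ∧ ∑ i, (s i : ℕ) * (f i : ℕ) = n then ∏ i, ((s i : ℕ) : ℚ) else 0 := by
  by_cases hf : ∀ i, 0 < (f i : ℕ)
  · simp only [hf, implies_true, true_and]
    rw [prod_congr_mod n _ (fun i => ∑ s : Fin (n + 1),
      PowerSeries.C ((s : ℕ) : ℚ) * PowerSeries.X ^ ((s : ℕ) * (f i : ℕ)))]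
    · rw [Finset.prod_univ_sum, map_sum]
      simp only [Fintype.piFinset_univ]
      refine Finset.sum_congr rfl fun s _ => ?_
      rw [Finset.prod_mul_distrib, ← map_prod, Finset.prod_pow_eq_pow_sum, PowerSeries.coeff_C_mul,
        PowerSeries.coeff_X_pow]
      simp [eq_comm]
    · intro i j hj
      have := coeff_xx_pow (f i) j 1 (hf i).ne'
      rw [pow_one, pow_one] at this
      rw [this, map_sum]
      simp only [PowerSeries.coeff_C_mul, PowerSeries.coeff_X_pow, uu, PowerSeries.coeff_mk]
      split_ifs with hd
      · obtain ⟨t, rfl⟩ := hd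
        rw [Nat.mul_div_cancel_left _ (hf i)]
        have ht : t < n + 1 := by nlinarith [hf i]
        rw [Finset.sum_eq_single (⟨t, ht⟩ : Fin (n + 1))]
        · simp [mul_comm]
        · intro b _ hb
          rw [if_neg, mul_zero]
          intro he
          rw [mul_comm] at he
          exact hb (Fin.ext (Nat.eq_of_mul_eq_mul_right (hf i) he).symm)
        · simp
      · symm
        refine Finset.sum_eq_zero fun s _ => ?_
        rw [if_neg, mul_zero]
        rintro rfl
        exact hd (dvd_mul_left _ _)
  · simp only [hf, false_and, if_false, Finset.sum_const_zero]
    push Not at hf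
    obtain ⟨i, hi⟩ := hf
    rw [Finset.prod_eq_zero (Finset.mem_univ i), map_zero]
    rw [Nat.le_zero.mp hi]; simp [xx]

lemma ee_diag (n k : ℕ) : PowerSeries.coeff n (ee k n) = (macAcoeff n k : ℚ) := by
  have h1 : ee k n = ∑ f : Fin k → Fin (n + 1) with StrictMono f, ∏ i, xx (f i) := by
    rw [ee]
    symm
    refine Finset.sum_bij (fun f _ => Finset.univ.image fun i => (f i : ℕ)) ?_ ?_ ?_ ?_
    · intro f hf
      rw [Finset.mem_filter] at hf
      rw [Finset.mem_powersetCard]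
      refine ⟨fun x hx => ?_, ?_⟩
      · obtain ⟨i, _, rfl⟩ := Finset.mem_image.mp hx
        exact Finset.mem_range.mpr (f i).isLt
      · rw [Finset.card_image_of_injective _ (f := fun i => (f i : ℕ)) (Fin.val_injective.comp hf.2.injective)]
        simp
    · intro f hf g hg h
      rw [Finset.mem_filter] at hf hg
      have h' := congrArg (fun s : Finset ℕ => (s : Set ℕ)) h
      simp only [Finset.coe_image, Finset.coe_univ, Set.image_univ] at h'
      have hf' : StrictMono fun i => (f i : ℕ) := fun a b hab => hf.2 hab
      have hg' : StrictMono fun i => (g i : ℕ) := fun a b hab => hg.2 hab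
      have := (StrictMono.range_inj hf' hg').mp h'
      funext i
      exact Fin.ext (congrFun this i)
    · intro t ht
      rw [Finset.mem_powersetCard] at ht
      refine ⟨fun i => ⟨t.orderEmbOfFin ht.2 i, by
        simpa using ht.1 (t.orderEmbOfFin_mem ht.2 i)⟩, ?_, ?_⟩
      · simp only [Finset.mem_filter, Finset.mem_univ, true_and]
        intro a b hab
        simpa using hab
      · simp
    · intro f hf
      rw [Finset.mem_filter] at hf
      rw [Finset.prod_image]
      exact (Fin.val_injective.comp hf.2.injective).injOn
  rw [h1, map_sum, macAcoeff, Finset.sum_filter, Finset.sum_filter, Fintype.sum_prod_type_right]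
  push_cast
  refine Finset.sum_congr rfl fun f _ => ?_
  have hsm : StrictMono (fun i => (f i : ℕ)) ↔ StrictMono f := Iff.rfl
  split_ifs with hf
  · rw [coeff_prod_xx]
    refine Finset.sum_congr rfl fun s _ => ?_
    by_cases hs : ∀ i, 0 < (s i : ℕ)
    · simp [hs, hsm, hf]
    · have : ∏ i, ((s i : ℕ) : ℚ) = 0 := by
        push Not at hs
        obtain ⟨i, hi⟩ := hs
        exact Finset.prod_eq_zero (Finset.mem_univ i) (by rw [Nat.le_zero.mp hi]; simp)
      simp [this]
  · simp [hsm, hf]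

lemma mac_newton (k : ℕ) : (k : ℚ) • (PowerSeries.mk fun n => (macAcoeff n k : ℚ)) =
    ((-1) ^ (k + 1) : ℚ) • ∑ a ∈ Finset.HasAntidiagonal.antidiagonal k with a.1 < k,
      ((-1) ^ a.1 : ℚ) • ((PowerSeries.mk fun n => (macAcoeff n a.1 : ℚ)) * PP a.2) := by
  ext n
  have h := congrArg (PowerSeries.coeff n) (newton k n)
  have hC : ∀ j : ℕ, ((-1 : PowerSeries ℚ)) ^ j = PowerSeries.C ((-1 : ℚ) ^ j) := by intro j; simp
  have hk : (k : PowerSeries ℚ) = PowerSeries.C (k : ℚ) := by simp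
  simp only [hC, hk, mul_assoc, PowerSeries.coeff_C_mul, map_sum, ee_diag] at h
  simp only [map_smul, map_sum, PowerSeries.coeff_mk, smul_eq_mul]
  rw [h]
  congr 1
  refine Finset.sum_congr rfl fun a ha => ?_
  congr 1
  rw [Finset.mem_filter] at ha
  have ha' := Finset.HasAntidiagonal.mem_antidiagonal.mp ha.1
  rw [PowerSeries.coeff_mul, PowerSeries.coeff_mul]
  refine Finset.sum_congr rfl fun p hp => ?_
  have hp' := Finset.HasAntidiagonal.mem_antidiagonal.mp hp
  rw [psum_coeff n p.2 a.2 (by omega) (by omega), ee_stab _ _ _ (show p.1 ≤ n by omega), ee_diag,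
    PowerSeries.coeff_mk]

lemma mac_mem (k : ℕ) : (PowerSeries.mk fun n => (macAcoeff n k : ℚ)) ∈
    Algebra.adjoin ℚ ({E2, E4, E6} : Set (PowerSeries ℚ)) := by
  induction k using Nat.strong_induction_on with
  | _ k ih =>
    rcases Nat.eq_zero_or_pos k with rfl | hk
    · have : (PowerSeries.mk fun n => (macAcoeff n 0 : ℚ)) = 1 := by
        ext n
        rw [PowerSeries.coeff_mk, ← ee_diag, ee_zero]
      rw [this]
      exact Subalgebra.one_mem _
    · have hk' : (k : ℚ) ≠ 0 := by positivity
      rw [← one_smul ℚ (PowerSeries.mk fun n => (macAcoeff n k : ℚ)), ← inv_mul_cancel₀ hk',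
        ← smul_smul, mac_newton]
      refine Subalgebra.smul_mem _ (Subalgebra.smul_mem _ (Subalgebra.sum_mem _ fun a ha => ?_) _) _
      rw [Finset.mem_filter] at ha
      have ha' := Finset.HasAntidiagonal.mem_antidiagonal.mp ha.1
      exact Subalgebra.smul_mem _ (Subalgebra.mul_mem _ (ih _ ha.2) (PP_mem _ (by omega))) _

/-- MacMahon's generating function `A_k = ∑_{n ≥ 1} a_{n,k} qⁿ` lies in the ring of
quasi-modular forms, i.e. the `ℚ`-subalgebra of `ℚ⟦q⟧` generated by `E₂`, `E₄` and `E₆`. -/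
theorem stmt6 (k : ℕ) (hk : 1 ≤ k) :
    (PowerSeries.mk fun n => (macAcoeff n k : ℚ)) ∈
      Algebra.adjoin ℚ ({E2, E4, E6} : Set (PowerSeries ℚ)) := by
  exact mac_mem k
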